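/- arXiv:1807.11166 — 6 statements merged into one kernel-verified Lean document; each statement's English description precedes it below -/
import Mathlib

section
/- Let X be a real normed linear space and let x be a unit vector in X. If x is a right symmetric point and x is a smooth point, then x is a left symmetric point. -/
open Filter Topology Set

/-- Birkhoff–James orthogonality: `x ⊥_B y` iff `‖x + t • y‖ ≥ ‖x‖` for all real `t`.
For bounded linear operators this is orthogonality in the operator norm. -/
def BJOrth {E : Type*} [NormedAddCommGroup E] [NormedSpace ℝ E] (x y : E) : Prop :=
  ∀ t : ℝ, ‖x‖ ≤ ‖x + t • y‖

/-- A point `x` is left symmetric if `x ⊥_B y` implies `y ⊥_B x` for all `y`. -/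
def LeftSymPt {E : Type*} [NormedAddCommGroup E] [NormedSpace ℝ E] (x : E) : Prop :=
  ∀ y : E, BJOrth x y → BJOrth y x

/-- A point `x` is right symmetric if `y ⊥_B x` implies `x ⊥_B y` for all `y`. -/
def RightSymPt {E : Type*} [NormedAddCommGroup E] [NormedSpace ℝ E] (x : E) : Prop :=
  ∀ y : E, BJOrth y x → BJOrth x y

/-- A unit vector `x` is a smooth point if it has a unique norming functional. -/
def SmoothPt {E : Type*} [NormedAddCommGroup E] [NormedSpace ℝ E] (x : E) : Prop :=
  ∃! f : E →L[ℝ] ℝ, ‖f‖ = 1 ∧ f x = 1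

/-- A normed space is reflexive if the canonical embedding into the double dual is surjective. -/
def ReflexiveSp (E : Type*) [NormedAddCommGroup E] [NormedSpace ℝ E] : Prop :=
  Function.Surjective (NormedSpace.inclusionInDoubleDual ℝ E)

/-- The Kadets–Klee property: weak convergence of a sequence together with convergence of norms
implies norm convergence. -/
def KadetsKlee (E : Type*) [NormedAddCommGroup E] [NormedSpace ℝ E] : Prop :=
  ∀ (x : ℕ → E) (x₀ : E),
    (∀ f : E →L[ℝ] ℝ, Tendsto (fun n => f (x n)) atTop (nhds (f x₀))) →
    Tendsto (fun n => ‖x n‖) atTop (nhds ‖x₀‖) →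
    Tendsto (fun n => ‖x n - x₀‖) atTop (nhds 0)

/-- The norm attaining set `M_T` of a bounded linear operator. -/
def normAttain {X Y : Type*} [NormedAddCommGroup X] [NormedSpace ℝ X]
    [NormedAddCommGroup Y] [NormedSpace ℝ Y] (T : X →L[ℝ] Y) : Set X :=
  {x | ‖x‖ = 1 ∧ ‖T x‖ = ‖T‖}

/-- `inPlus u v` means `v ∈ u⁺`, i.e. `‖u + t • v‖ ≥ ‖u‖` for all `t ≥ 0`. -/
def inPlus {E : Type*} [NormedAddCommGroup E] [NormedSpace ℝ E] (u v : E) : Prop :=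
  ∀ t : ℝ, 0 ≤ t → ‖u‖ ≤ ‖u + t • v‖

/-- `inMinus u v` means `v ∈ u⁻`, i.e. `‖u + t • v‖ ≥ ‖u‖` for all `t ≤ 0`. -/
def inMinus {E : Type*} [NormedAddCommGroup E] [NormedSpace ℝ E] (u v : E) : Prop :=
  ∀ t : ℝ, t ≤ 0 → ‖u‖ ≤ ‖u + t • v‖

/-!
If the unit vector `x` is smooth with norming functional `f`, then `x ⊥_B y` forces `f y = 0`:
orthogonality says that `x` has distance `‖x‖` from the line `ℝ ∙ y`, so Hahn–Banach provides a
norming functional of `x` that vanishes at `y`, and `f` is the only candidate.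

Now let `x ⊥_B y`, and let `s • x` be a point of `ℝ ∙ x` nearest to `y`, so that
`y - s • x ⊥_B x`. Right symmetry gives `x ⊥_B y - s • x`, hence `0 = f (y - s • x) = -s`, and
therefore `y ⊥_B x`.
-/

theorem exists_mem_infDist_eq_dist_of_properSpace {α : Type*} [PseudoMetricSpace α] {s : Set α}
    [ProperSpace s] (hs : s.Nonempty) (x : α) : ∃ y ∈ s, Metric.infDist x s = dist x y := by
  obtain ⟨a, ha⟩ := hs
  have dist_tendsto : Tendsto (fun y : s => dist x y) (cocompact s) atTop := by
    refine tendsto_atTop_mono (fun y => ?_) (tendsto_atTop_add_const_right _ (-dist x a)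
      (tendsto_dist_right_cocompact_atTop (⟨a, ha⟩ : s)))
    have triangle : dist (y : α) a ≤ dist x y + dist x a := dist_triangle_left _ _ _
    rw [Subtype.dist_eq]
    linarith
  have : Nonempty s := ⟨⟨a, ha⟩⟩
  obtain ⟨y, hy⟩ := Continuous.exists_forall_le (by fun_prop) dist_tendsto
  exact ⟨y, y.2, le_antisymm (Metric.infDist_le_dist_of_mem y.2)
    ((Metric.le_infDist ⟨a, ha⟩).2 fun z hz => hy ⟨z, hz⟩)⟩

theorem infDist_sub_of_mem {E : Type*} [SeminormedAddCommGroup E] {S : AddSubgroup E} {m : E}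
    (hm : m ∈ S) (x : E) : Metric.infDist (x - m) S = Metric.infDist x S := by
  rw [← QuotientAddGroup.norm_mk, ← QuotientAddGroup.norm_mk, QuotientAddGroup.mk_sub,
    (QuotientAddGroup.eq_zero_iff m).2 hm, sub_zero]

section HahnBanach

variable {𝕜 E : Type*} [SeminormedAddCommGroup E]

theorem norm_comp_mkQL [NontriviallyNormedField 𝕜] [NormedSpace 𝕜 E] {F : Type*}
    [SeminormedAddCommGroup F] [NormedSpace 𝕜 F] (S : Submodule 𝕜 E) (φ : E ⧸ S →L[𝕜] F) :
    ‖φ ∘L S.mkQL‖ = ‖φ‖ := by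
  apply le_antisymm
  · refine (φ ∘L S.mkQL).opNorm_le_bound (norm_nonneg φ) fun v => ?_
    exact φ.le_opNorm_of_le (Submodule.Quotient.norm_mk_le S v)
  · refine φ.opNorm_le_bound (norm_nonneg _) fun q => ?_
    refine le_mul_of_forall_lt₀ fun a ha b hb => ?_
    obtain ⟨v, rfl, hv⟩ := QuotientAddGroup.norm_lt_iff.1 hb
    exact (φ ∘L S.mkQL).le_of_opNorm_le_of_le ha.le hv.le

theorem exists_dual_vector_eq_infDist [RCLike 𝕜] [NormedSpace 𝕜 E] (S : Submodule 𝕜 E) {x : E}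
    (hx : Metric.infDist x S ≠ 0) :
    ∃ f : StrongDual 𝕜 E, ‖f‖ = 1 ∧ f x = (Metric.infDist x S : ℝ) ∧ ∀ y ∈ S, f y = 0 := by
  have norm_mk : ‖S.mkQ x‖ = Metric.infDist x S := QuotientAddGroup.norm_mk x
  obtain ⟨φ, hφ, hφx⟩ := exists_dual_vector 𝕜 (S.mkQ x) (norm_mk ▸ hx)
  refine ⟨φ ∘L S.mkQL, (norm_comp_mkQL S φ).trans hφ, ?_, fun y hy => ?_⟩
  · exact hφx.trans (congrArg _ norm_mk)
  · change φ (S.mkQ y) = 0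
    rw [Submodule.mkQ_apply, (Submodule.Quotient.mk_eq_zero S).2 hy, map_zero]

end HahnBanach

section BirkhoffJames

variable {E : Type*} [NormedAddCommGroup E] [NormedSpace ℝ E] {x y : E}

theorem bjOrth_iff_infDist_span_singleton :
    BJOrth x y ↔ Metric.infDist x (ℝ ∙ y : Submodule ℝ E) = ‖x‖ := by
  constructor
  · intro h
    apply le_antisymm
    · simpa using Metric.infDist_le_dist_of_mem (x := x) (ℝ ∙ y).zero_mem
    · refine (Metric.le_infDist (Submodule.nonempty _)).2 fun m hm => ?_
      obtain ⟨t, rfl⟩ := Submodule.mem_span_singleton.1 hm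
      simpa [dist_eq_norm, sub_eq_add_neg] using h (-t)
  · intro h t
    calc ‖x‖ = Metric.infDist x (ℝ ∙ y : Submodule ℝ E) := h.symm
      _ ≤ dist x (-t • y) := Metric.infDist_le_dist_of_mem
        (Submodule.smul_mem _ _ (Submodule.mem_span_singleton_self y))
      _ = ‖x + t • y‖ := by rw [dist_eq_norm, neg_smul, sub_neg_eq_add]

theorem BJOrth.exists_dual_vector (hx : x ≠ 0) (h : BJOrth x y) :
    ∃ f : StrongDual ℝ E, ‖f‖ = 1 ∧ f x = ‖x‖ ∧ f y = 0 := by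
  have infDist_eq := bjOrth_iff_infDist_span_singleton.1 h
  obtain ⟨f, hf, hfx, hfS⟩ := exists_dual_vector_eq_infDist (ℝ ∙ y)
    (infDist_eq ▸ norm_ne_zero_iff.2 hx)
  exact ⟨f, hf, hfx.trans infDist_eq, hfS y (Submodule.mem_span_singleton_self y)⟩

theorem exists_bjOrth_sub_smul (x y : E) : ∃ s : ℝ, BJOrth (y - s • x) x := by
  have : ProperSpace ((ℝ ∙ x : Submodule ℝ E) : Set E) := FiniteDimensional.proper_real (ℝ ∙ x)
  obtain ⟨m, hm, hdist⟩ :=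
    exists_mem_infDist_eq_dist_of_properSpace (Submodule.nonempty (ℝ ∙ x)) y
  obtain ⟨s, rfl⟩ := Submodule.mem_span_singleton.1 hm
  refine ⟨s, bjOrth_iff_infDist_span_singleton.2 ?_⟩
  calc Metric.infDist (y - s • x) (ℝ ∙ x : Submodule ℝ E)
      = Metric.infDist y (ℝ ∙ x : Submodule ℝ E) :=
        infDist_sub_of_mem (S := (ℝ ∙ x : Submodule ℝ E).toAddSubgroup) hm y
    _ = ‖y - s • x‖ := by rw [hdist, dist_eq_norm]

theorem SmoothPt.exists_dual_apply_eq_zero_of_bjOrth (hsmooth : SmoothPt x) (hx : ‖x‖ = 1) :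
    ∃ f : StrongDual ℝ E, f x = 1 ∧ ∀ y, BJOrth x y → f y = 0 := by
  obtain ⟨f, hf, hunique⟩ := hsmooth
  refine ⟨f, hf.2, fun y hxy => ?_⟩
  obtain ⟨g, hg, hgx, hgy⟩ := hxy.exists_dual_vector (norm_ne_zero_iff.1 (hx ▸ one_ne_zero))
  rwa [← hunique g ⟨hg, hgx.trans hx⟩]

end BirkhoffJames

theorem right_symmetric_smooth_implies_left_symmetric
    {X : Type*} [NormedAddCommGroup X] [NormedSpace ℝ X]
    (x : X) (hx : ‖x‖ = 1) (hright : RightSymPt x) (hsmooth : SmoothPt x) :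
    LeftSymPt x := by
  intro y hxy
  obtain ⟨f, hfx, hker⟩ := hsmooth.exists_dual_apply_eq_zero_of_bjOrth hx
  obtain ⟨s, hs⟩ := exists_bjOrth_sub_smul x y
  have s_eq_zero : s = 0 := by
    simpa [hker y hxy, hfx] using hker _ (hright _ hs)
  simpa [s_eq_zero] using hs
end

section
/- Let X be a strictly convex real normed linear space and let x be a unit vector in X. If x is a left symmetric point, then x is a right symmetric point. -/
open Filter Topology Set

/-!
Every line `y + ℝ x` contains a vector `z` with `x ⊥_B z`: cancel the value at `y` of a norming
functional of `x`. Left symmetry of `x` turns this into `z ⊥_B x`. If moreover `y ⊥_B x`, then `y`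
and `z` both minimize the norm on that line, and strict convexity allows only one minimizer, so
`y = z` and `x ⊥_B y`.
-/

section BirkhoffJames

variable {E : Type*} [NormedAddCommGroup E] [NormedSpace ℝ E] {x y : E}

theorem BJOrth.zero_left (y : E) : BJOrth 0 y := by
  intro t
  rw [norm_zero]
  exact norm_nonneg _

theorem BJOrth.of_norming {f : E →L[ℝ] ℝ} (hf : ‖f‖ ≤ 1) (hfx : f x = ‖x‖) (hfy : f y = 0) :
    BJOrth x y := by
  intro t
  calc
    ‖x‖ = f (x + t • y) := by rw [map_add, map_smul, hfx, hfy, smul_zero, add_zero]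
    _ ≤ ‖f (x + t • y)‖ := Real.le_norm_self _
    _ ≤ 1 * ‖x + t • y‖ := f.le_of_opNorm_le hf _
    _ = ‖x + t • y‖ := one_mul _

theorem exists_bjOrth_add_smul (x y : E) : ∃ c : ℝ, BJOrth x (y + c • x) := by
  obtain rfl | hx := eq_or_ne x 0
  · exact ⟨0, .zero_left _⟩
  obtain ⟨f, hf, hfx⟩ := exists_dual_vector'' ℝ x
  replace hfx : f x = ‖x‖ := hfx
  refine ⟨-(f y / ‖x‖), .of_norming hf hfx ?_⟩
  rw [map_add, map_smul, hfx, smul_eq_mul, neg_mul, div_mul_cancel₀ _ (norm_ne_zero_iff.mpr hx),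
    add_neg_cancel]

theorem BJOrth.norm_add_smul_eq {c : ℝ} (hy : BJOrth y x) (hz : BJOrth (y + c • x) x) :
    ‖y + c • x‖ = ‖y‖ := by
  refine le_antisymm ?_ (hy c)
  simpa only [neg_smul, add_neg_cancel_right] using hz (-c)

theorem BJOrth.add_smul_eq_self [StrictConvexSpace ℝ E] {c : ℝ} (hy : BJOrth y x)
    (hz : BJOrth (y + c • x) x) : y + c • x = y := by
  by_contra hne
  have hmid_lt : ‖(1 / 2 : ℝ) • (y + (y + c • x))‖ < ‖y‖ :=
    (norm_midpoint_lt_iff (hy.norm_add_smul_eq hz).symm).mpr (Ne.symm hne)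
  have hmid : (1 / 2 : ℝ) • (y + (y + c • x)) = y + (c / 2) • x := by module
  rw [hmid] at hmid_lt
  exact hmid_lt.not_ge (hy (c / 2))

theorem left_symmetric_implies_right_symmetric_of_strictConvex_general [StrictConvexSpace ℝ E]
    (hleft : LeftSymPt x) : RightSymPt x := by
  intro y hy
  obtain ⟨c, hxz⟩ := exists_bjOrth_add_smul x y
  have hzx : BJOrth (y + c • x) x := hleft _ hxz
  rwa [hy.add_smul_eq_self hzx] at hxz

end BirkhoffJames

theorem left_symmetric_implies_right_symmetric_of_strictConvex
    {X : Type*} [NormedAddCommGroup X] [NormedSpace ℝ X] [StrictConvexSpace ℝ X]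
    (x : X) (hx : ‖x‖ = 1) (hleft : LeftSymPt x) :
    RightSymPt x :=
  left_symmetric_implies_right_symmetric_of_strictConvex_general hleft
end

section
/- Let X be a strictly convex real normed linear space and let x be a unit vector in X. If x is a left symmetric point, then x is a smooth point. -/
open Filter Topology Set

/-!
If `x` is a left symmetric unit vector and `f` is a norming functional at `x`, then `x` is
orthogonal to `y - f y • x ∈ ker f`, so by left symmetry `y - f y • x` is orthogonal to `x`. This
says that `f y • x` is a best approximation to `y` on the line `ℝ x`. In a strictly convex space
best approximations on a line are unique, so `f y` does not depend on the choice of `f`.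
-/

section Orthogonality

variable {E : Type*} [NormedAddCommGroup E] [NormedSpace ℝ E] {u v x y : E} {a b t : ℝ}
  {f g : E →L[ℝ] ℝ}

theorem bjOrth_of_norming_of_apply_eq_zero (hf : ‖f‖ ≤ 1) (hfx : f x = ‖x‖) (hfy : f y = 0) :
    BJOrth x y := fun t =>
  calc
    ‖x‖ = f (x + t • y) := by simp [hfx, hfy]
    _ ≤ ‖f (x + t • y)‖ := Real.le_norm_self _
    _ ≤ ‖x + t • y‖ := by simpa using f.le_of_opNorm_le hf (x + t • y)

theorem LeftSymPt.bjOrth_norm_smul_sub_apply_smul (hx : LeftSymPt x) (hf : ‖f‖ ≤ 1)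
    (hfx : f x = ‖x‖) (y : E) : BJOrth (‖x‖ • y - f y • x) x :=
  hx _ (bjOrth_of_norming_of_apply_eq_zero hf hfx (by simp [hfx, mul_comm]))

variable [StrictConvexSpace ℝ E]

theorem BJOrth.norm_lt_norm_add_smul (h : BJOrth u v) (htv : t • v ≠ 0) : ‖u‖ < ‖u + t • v‖ := by
  refine (h t).lt_of_ne fun heq => (h (t / 2)).not_gt ?_
  have hmid : (1 / 2 : ℝ) • (u + (u + t • v)) = u + (t / 2) • v := by module
  rw [← hmid, norm_midpoint_lt_iff heq]
  simpa using htv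

theorem BJOrth.smul_eq_smul_of_sub_smul (ha : BJOrth (y - a • x) x) (hb : BJOrth (y - b • x) x) :
    a • x = b • x := by
  by_contra hne
  have hab : (a - b) • x ≠ 0 := by rwa [sub_smul, sub_ne_zero]
  have hlt : ‖y - a • x‖ < ‖y - b • x‖ := by
    convert ha.norm_lt_norm_add_smul hab using 2
    module
  have hle : ‖y - b • x‖ ≤ ‖y - a • x‖ := by
    convert hb (b - a) using 2
    module
  exact hle.not_gt hlt

theorem LeftSymPt.norming_functional_unique (hx : LeftSymPt x) (hx₀ : x ≠ 0)
    (hf : ‖f‖ ≤ 1) (hfx : f x = ‖x‖) (hg : ‖g‖ ≤ 1) (hgx : g x = ‖x‖) : f = g := by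
  ext y
  exact smul_left_injective ℝ hx₀
    ((hx.bjOrth_norm_smul_sub_apply_smul hf hfx y).smul_eq_smul_of_sub_smul
      (hx.bjOrth_norm_smul_sub_apply_smul hg hgx y))

end Orthogonality

theorem left_symmetric_implies_smooth_of_strictConvex
    {X : Type*} [NormedAddCommGroup X] [NormedSpace ℝ X] [StrictConvexSpace ℝ X]
    (x : X) (hx : ‖x‖ = 1) (hleft : LeftSymPt x) :
    SmoothPt x := by
  have hx₀ : ‖x‖ ≠ 0 := hx ▸ one_ne_zero
  obtain ⟨f, hf, hfx⟩ : ∃ f : X →L[ℝ] ℝ, ‖f‖ = 1 ∧ f x = ‖x‖ := exists_dual_vector ℝ x hx₀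
  refine ⟨f, ⟨hf, hfx.trans hx⟩, fun g ⟨hg, hgx⟩ => ?_⟩
  exact hleft.norming_functional_unique (norm_ne_zero_iff.mp hx₀)
    hg.le (hgx.trans hx.symm) hf.le hfx
end

section
/- Let X be a real reflexive Banach space with the Kadets–Klee property, let Y be a real Banach space, let T : X → Y be a compact bounded linear operator, and let A : X → Y be a bounded linear operator with T ⊥_B A. If in addition M_T = D ∪ (−D) where D is a compact connected subset of the unit sphere of X, then there exists x ∈ M_T such that Tx ⊥_B Ax. -/
open Filter Topology Set

/-!
Maximizing vectors `x_ε` of `T + ε A`, chosen up to an error `o(ε)`, also maximize `T` as `ε → 0⁺`,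
because `‖T + ε A‖ ≥ ‖T‖`. Reflexivity gives a weakly convergent subsequence, compactness of `T`
puts its limit `y` into `M_T`, and the Kadets–Klee property makes the convergence strong. By
convexity, for `t ≥ ε` the mean slope of `s ↦ ‖T x_ε + s A x_ε‖` on `[0, t]` is at least that on
`[0, ε]`, which is at least `-o(1)`; in the limit `A y ∈ (T y)⁺`. Replacing `A` by `-A` gives a
point `z` of `M_T` with `A z ∈ (T z)⁻`. Both points may be moved into `D` by a sign change. The two
conditions are closed and cover `D`, so they meet on the connected set `D`.
-/

section Compactness

variable {α β ι : Type*} [TopologicalSpace α] [TopologicalSpace β] [T2Space β]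
  {K : Set α} {g : α → β}

theorem tendsto_nhds_of_tendsto_comp_of_isCompact (hK : IsCompact K) (hg : Continuous g) {y : α}
    (hinj : ∀ z ∈ K, g z = g y → z = y) {l : Filter ι} {u : ι → α} (hu : ∀ᶠ i in l, u i ∈ K)
    (h : Tendsto (g ∘ u) l (𝓝 (g y))) : Tendsto u l (𝓝 y) := by
  refine hK.tendsto_nhds_of_unique_mapClusterPt hu fun z hz hcluster => hinj z hz ?_
  have hgz : MapClusterPt (g z) l (g ∘ u) := hcluster.continuousAt_comp hg.continuousAt
  have : (𝓝 (g z) ⊓ 𝓝 (g y)).NeBot := hgz.clusterPt.neBot.mono (inf_le_inf_left _ h)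
  exact eq_of_nhds_neBot this

theorem isSeqCompact_of_isCompact_of_injOn [FirstCountableTopology β] (hK : IsCompact K)
    (hg : Continuous g) (hinj : InjOn g K) : IsSeqCompact K := by
  intro x hx
  obtain ⟨y, hy, hcluster⟩ := hK.exists_mapClusterPt_of_frequently (l := atTop)
    (Frequently.of_forall hx)
  obtain ⟨φ, hφ, hlim⟩ := (hcluster.continuousAt_comp hg.continuousAt).tendsto_subseq
  exact ⟨y, hy, φ, hφ, tendsto_nhds_of_tendsto_comp_of_isCompact hK hg
    (fun z hz => hinj hz hy) (Eventually.of_forall fun n => hx (φ n)) hlim⟩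

end Compactness

section WeakTopology

variable {𝕜 E F ι : Type*} [RCLike 𝕜] [NormedAddCommGroup E] [NormedSpace 𝕜 E]
  [NormedAddCommGroup F] [NormedSpace 𝕜 F]

theorem continuous_dual_apply_toWeakSpace_symm (f : StrongDual 𝕜 E) :
    Continuous fun w : WeakSpace 𝕜 E => f ((toWeakSpace 𝕜 E).symm w) :=
  WeakBilin.eval_continuous (topDualPairing 𝕜 E).flip f

theorem tendsto_dual_apply_of_tendsto_toWeakSpace {l : Filter ι} {u : ι → E} {y : E}
    (h : Tendsto (fun i => toWeakSpace 𝕜 E (u i)) l (𝓝 (toWeakSpace 𝕜 E y)))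
    (f : StrongDual 𝕜 E) : Tendsto (fun i => f (u i)) l (𝓝 (f y)) :=
  ((continuous_dual_apply_toWeakSpace_symm f).tendsto _).comp h

theorem norm_le_of_tendsto_toWeakSpace {l : Filter ι} [l.NeBot] {u : ι → E} {y : E} {r : ℝ}
    (h : Tendsto (fun i => toWeakSpace 𝕜 E (u i)) l (𝓝 (toWeakSpace 𝕜 E y)))
    (hu : ∀ᶠ i in l, ‖u i‖ ≤ r) : ‖y‖ ≤ r := by
  obtain ⟨f, hf, hfy⟩ := exists_dual_vector'' 𝕜 y
  calc ‖y‖ = ‖f y‖ := by simp [hfy]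
    _ ≤ r := le_of_tendsto (tendsto_dual_apply_of_tendsto_toWeakSpace h f).norm <|
      hu.mono fun i hi => by simpa using f.le_of_opNorm_le_of_le hf hi

variable (𝕜) in
theorem exists_countable_dual_injOn_of_isSeparable {s : Set E}
    (hs : TopologicalSpace.IsSeparable s) :
    ∃ C : Set (StrongDual 𝕜 E), C.Countable ∧ InjOn (fun x (f : C) => f.1 x) s := by
  obtain ⟨c, hc, hsub⟩ := (hs.prod hs).image continuous_sub
  choose f hf_norm hf_apply using exists_dual_vector'' 𝕜 (E := E)
  refine ⟨f '' c, hc.image f, fun x hx y hy hxy => ?_⟩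
  -- A functional norming `z` and vanishing at `x - y` gives `‖z‖ ≤ ‖x - y - z‖`; let `z → x - y`.
  have hvanish : ∀ z ∈ c, f z (x - y) = 0 := fun z hz => by
    simpa [sub_eq_zero] using congrFun hxy ⟨f z, mem_image_of_mem f hz⟩
  have hdist : ∀ z ∈ c, ‖z‖ ≤ ‖x - y - z‖ := fun z hz =>
    calc ‖z‖ = ‖f z (x - y - z)‖ := by simp [map_sub _ (x - y) z, hvanish z hz, hf_apply]
      _ ≤ ‖x - y - z‖ := by simpa using (f z).le_of_opNorm_le (hf_norm z) (x - y - z)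
  have hclosed : IsClosed {z : E | ‖z‖ ≤ ‖x - y - z‖} :=
    isClosed_le continuous_norm (by fun_prop)
  have hmem : x - y ∈ closure c := hsub ⟨(x, y), ⟨hx, hy⟩, rfl⟩
  have : ‖x - y‖ ≤ ‖x - y - (x - y)‖ := closure_minimal hdist hclosed hmem
  simpa [sub_eq_zero] using this

theorem isSeqCompact_weakSpace_of_isCompact_of_isSeparable {K : Set (WeakSpace 𝕜 E)}
    (hK : IsCompact K) (hs : TopologicalSpace.IsSeparable (toWeakSpace 𝕜 E ⁻¹' K)) :
    IsSeqCompact K := by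
  obtain ⟨C, hC, hinj⟩ := exists_countable_dual_injOn_of_isSeparable 𝕜 hs
  have := hC.to_subtype
  exact isSeqCompact_of_isCompact_of_injOn hK
    (continuous_pi fun f : C => continuous_dual_apply_toWeakSpace_symm f.1)
    fun x hx y hy hxy => hinj hx hy hxy

theorem tendsto_of_isCompactOperator_of_tendsto_toWeakSpace {T : E →L[𝕜] F}
    (hT : IsCompactOperator T) {l : Filter ι} {u : ι → E} {y : E} {r : ℝ}
    (hu : ∀ᶠ i in l, ‖u i‖ ≤ r)
    (h : Tendsto (fun i => toWeakSpace 𝕜 E (u i)) l (𝓝 (toWeakSpace 𝕜 E y))) :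
    Tendsto (fun i => T (u i)) l (𝓝 (T y)) := by
  have hK : IsCompact (closure (T '' Metric.closedBall 0 r)) :=
    hT.isCompact_closure_image_closedBall (f := (T : E →ₗ[𝕜] F)) r
  refine tendsto_nhds_of_tendsto_comp_of_isCompact hK (toWeakSpaceCLM 𝕜 F).continuous
    (fun z _ hz => (toWeakSpace 𝕜 F).injective hz) ?_
    (((WeakSpace.map T).continuous.tendsto _).comp h)
  filter_upwards [hu] with i hi
  exact subset_closure (mem_image_of_mem T (by simpa using hi))

end WeakTopology

section Reflexive

variable {X : Type*} [NormedAddCommGroup X] [NormedSpace ℝ X]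

theorem ReflexiveSp.isCompact_closure_of_isBounded (hX : ReflexiveSp X) {S : Set (WeakSpace ℝ X)}
    (hS : Bornology.IsBounded (toWeakSpace ℝ X ⁻¹' S)) : IsCompact (closure S) := by
  have hsurj : Function.Surjective (NormedSpace.inclusionInDoubleDualWeak ℝ X) :=
    StrongDual.toWeakDual.surjective.comp hX
  refine NormedSpace.isCompact_closure_of_isBounded ℝ X S hS ?_
  simp [hsurj.range_eq]

theorem ReflexiveSp.exists_subseq_tendsto_toWeakSpace (hX : ReflexiveSp X) {x : ℕ → X}
    (hx : Bornology.IsBounded (range x)) :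
    ∃ (y : X) (φ : ℕ → ℕ), StrictMono φ ∧
      Tendsto (fun n => toWeakSpace ℝ X (x (φ n))) atTop (𝓝 (toWeakSpace ℝ X y)) := by
  let V : Submodule ℝ X := Submodule.span ℝ (range x)
  let K : Set (WeakSpace ℝ X) := closure (toWeakSpace ℝ X '' range x)
  have hKcpt : IsCompact K := hX.isCompact_closure_of_isBounded <| by
    rwa [preimage_image_eq _ (toWeakSpace ℝ X).injective]
  have hKV : toWeakSpace ℝ X ⁻¹' K ⊆ closure V := by
    rw [← preimage_image_eq (closure (V : Set X)) (toWeakSpace ℝ X).injective,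
      V.convex.toWeakSpace_closure ℝ]
    exact preimage_mono (closure_mono (image_mono Submodule.subset_span))
  have hKsep : TopologicalSpace.IsSeparable (toWeakSpace ℝ X ⁻¹' K) :=
    ((countable_range x).isSeparable.span (R := ℝ)).closure.mono hKV
  obtain ⟨w, -, φ, hφ, hlim⟩ := isSeqCompact_weakSpace_of_isCompact_of_isSeparable hKcpt hKsep
    fun n => subset_closure (mem_image_of_mem (toWeakSpace ℝ X) (mem_range_self (f := x) n))
  exact ⟨(toWeakSpace ℝ X).symm w, φ, hφ, hlim⟩

theorem KadetsKlee.tendsto_of_tendsto_toWeakSpace (hX : KadetsKlee X) {x : ℕ → X} {y : X}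
    (h : Tendsto (fun n => toWeakSpace ℝ X (x n)) atTop (𝓝 (toWeakSpace ℝ X y)))
    (hnorm : Tendsto (fun n => ‖x n‖) atTop (𝓝 ‖y‖)) : Tendsto x atTop (𝓝 y) :=
  tendsto_iff_norm_sub_tendsto_zero.2 <|
    hX x y (tendsto_dual_apply_of_tendsto_toWeakSpace h) hnorm

end Reflexive

section NormConvexity

variable {E : Type*} [SeminormedAddCommGroup E] [NormedSpace ℝ E]

theorem convexOn_norm_add_smul (u v : E) :
    ConvexOn ℝ univ fun t : ℝ => ‖u + t • v‖ := by
  have h := (convexOn_univ_norm (E := E)).comp_affineMap (AffineMap.lineMap (k := ℝ) u (u + v))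
  simpa [Function.comp_def, AffineMap.lineMap_apply_module', add_comm] using h

theorem norm_sub_mul_le_norm_add_smul {u v : E} {ε t δ : ℝ} (hε : 0 < ε) (hεt : ε ≤ t)
    (h : ‖u‖ - ε * δ ≤ ‖u + ε • v‖) : ‖u‖ - t * δ ≤ ‖u + t • v‖ := by
  have ht : 0 < t := hε.trans_le hεt
  have hslope : (‖u + ε • v‖ - ‖u‖) / ε ≤ (‖u + t • v‖ - ‖u‖) / t := by
    simpa using (convexOn_norm_add_smul u v).secant_mono (mem_univ 0) (mem_univ ε) (mem_univ t)
      hε.ne' ht.ne' hεt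
  have hδ : -δ ≤ (‖u + ε • v‖ - ‖u‖) / ε := by
    rw [le_div_iff₀ hε]
    linarith
  have := (le_div_iff₀ ht).1 (hδ.trans hslope)
  linarith

end NormConvexity

section OneSided

variable {E : Type*} [NormedAddCommGroup E] [NormedSpace ℝ E] {u v : E}

theorem inPlus_of_tendsto {ι : Type*} {l : Filter ι} [l.NeBot] {a b : ι → E} {ε δ : ι → ℝ}
    (ha : Tendsto a l (𝓝 u)) (hb : Tendsto b l (𝓝 v)) (hε : Tendsto ε l (𝓝[>] 0))
    (hδ : Tendsto δ l (𝓝 0)) (h : ∀ᶠ i in l, ‖a i‖ - ε i * δ i ≤ ‖a i + ε i • b i‖) :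
    inPlus u v := by
  intro t ht
  rcases ht.eq_or_lt with rfl | ht
  · simp
  have hleft : Tendsto (fun i => ‖a i‖ - t * δ i) l (𝓝 ‖u‖) := by
    simpa using ha.norm.sub (hδ.const_mul t)
  refine le_of_tendsto_of_tendsto hleft (ha.add (hb.const_smul t)).norm ?_
  filter_upwards [hε (Ioc_mem_nhdsGT ht), h] with i hi hle
  exact norm_sub_mul_le_norm_add_smul hi.1 hi.2 hle

theorem bjOrth_iff_inPlus_and_inMinus : BJOrth u v ↔ inPlus u v ∧ inMinus u v :=
  ⟨fun h => ⟨fun t _ => h t, fun t _ => h t⟩,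
    fun h t => (le_total 0 t).elim (h.1 t) (h.2 t)⟩

theorem inPlus_neg_right : inPlus u (-v) ↔ inMinus u v :=
  ⟨fun h t ht => by simpa using h (-t) (neg_nonneg.2 ht),
    fun h t ht => by simpa using h (-t) (neg_nonpos.2 ht)⟩

theorem inPlus_neg_neg : inPlus (-u) (-v) ↔ inPlus u v := by
  have hnorm : ∀ t : ℝ, ‖-u + t • -v‖ = ‖u + t • v‖ := fun t => by
    rw [← norm_neg, neg_add, smul_neg, neg_neg, neg_neg]
  simp only [inPlus, norm_neg, hnorm]

theorem inPlus_or_inMinus (u v : E) : inPlus u v ∨ inMinus u v := by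
  by_contra! h
  simp only [inPlus, inMinus, not_forall, not_le] at h
  obtain ⟨⟨s, hs, hsu⟩, t, ht, htu⟩ := h
  have hmax : ‖u‖ ≤ max ‖u + t • v‖ ‖u + s • v‖ := by
    simpa using (convexOn_norm_add_smul u v).le_max_of_mem_Icc (mem_univ t) (mem_univ s) ⟨ht, hs⟩
  exact (max_lt htu hsu).not_ge hmax

theorem isClosed_setOf_inPlus : IsClosed {p : E × E | inPlus p.1 p.2} := by
  simp only [inPlus, ofPred_forall]
  exact isClosed_iInter fun t => isClosed_iInter fun _ => isClosed_le (by fun_prop) (by fun_prop)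

theorem isClosed_setOf_inMinus : IsClosed {p : E × E | inMinus p.1 p.2} := by
  simp only [inMinus, ofPred_forall]
  exact isClosed_iInter fun t => isClosed_iInter fun _ => isClosed_le (by fun_prop) (by fun_prop)

theorem exists_bjOrth_of_isPreconnected {α : Type*} [TopologicalSpace α] {D : Set α}
    (hD : IsPreconnected D) {f g : α → E} (hf : ContinuousOn f D) (hg : ContinuousOn g D)
    (hplus : ∃ x ∈ D, inPlus (f x) (g x)) (hminus : ∃ x ∈ D, inMinus (f x) (g x)) :
    ∃ x ∈ D, BJOrth (f x) (g x) := by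
  have himage := isPreconnected_closed_iff.1 (hD.image _ (hf.prodMk hg)) _ _
    isClosed_setOf_inPlus isClosed_setOf_inMinus (fun p _ => inPlus_or_inMinus p.1 p.2)
  simp only [← image_inter_preimage, image_nonempty] at himage
  obtain ⟨x, hx, hx_plus, hx_minus⟩ := himage hplus hminus
  exact ⟨x, hx, bjOrth_iff_inPlus_and_inMinus.2 ⟨hx_plus, hx_minus⟩⟩

end OneSided

section NormAttain

variable {X Y : Type*} [NormedAddCommGroup X] [NormedSpace ℝ X]
  [NormedAddCommGroup Y] [NormedSpace ℝ Y] {T A : X →L[ℝ] Y}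

theorem tendsto_norm_one_of_tendsto_norm_apply {ι : Type*} {l : Filter ι} {x : ι → X}
    (hT : T ≠ 0) (hx : ∀ i, ‖x i‖ ≤ 1) (h : Tendsto (fun i => ‖T (x i)‖) l (𝓝 ‖T‖)) :
    Tendsto (fun i => ‖x i‖) l (𝓝 1) := by
  have hTpos : 0 < ‖T‖ := norm_pos_iff.2 hT
  have hquot : Tendsto (fun i => ‖T (x i)‖ / ‖T‖) l (𝓝 1) := by
    simpa [hTpos.ne'] using h.div_const ‖T‖
  exact tendsto_of_tendsto_of_tendsto_of_le_of_le hquot tendsto_const_nhds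
    (fun i => (div_le_iff₀' hTpos).2 (T.le_opNorm (x i))) hx

theorem mem_normAttain_of_norm_le_one {x : X} (hT : T ≠ 0) (hx : ‖x‖ ≤ 1) (h : ‖T x‖ = ‖T‖) :
    x ∈ normAttain T := by
  refine ⟨hx.antisymm ?_, h⟩
  have : ‖T‖ * 1 ≤ ‖T‖ * ‖x‖ := by simpa [h] using T.le_opNorm x
  exact le_of_mul_le_mul_left this (norm_pos_iff.2 hT)

theorem exists_subseq_tendsto_mem_normAttain (hrefl : ReflexiveSp X) (hKK : KadetsKlee X)
    (hTcpt : IsCompactOperator T) (hT : T ≠ 0) {x : ℕ → X} (hx : ∀ n, ‖x n‖ ≤ 1)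
    (hTx : Tendsto (fun n => ‖T (x n)‖) atTop (𝓝 ‖T‖)) :
    ∃ y ∈ normAttain T, ∃ φ : ℕ → ℕ, StrictMono φ ∧ Tendsto (x ∘ φ) atTop (𝓝 y) := by
  obtain ⟨y, φ, hφ, hweak⟩ := hrefl.exists_subseq_tendsto_toWeakSpace <|
    isBounded_iff_forall_norm_le.2 ⟨1, forall_mem_range.2 hx⟩
  have hxφ : ∀ᶠ n in atTop, ‖x (φ n)‖ ≤ 1 := Eventually.of_forall fun n => hx (φ n)
  have hTxφ : Tendsto (fun n => ‖T (x (φ n))‖) atTop (𝓝 ‖T‖) := hTx.comp hφ.tendsto_atTop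
  have hTy : ‖T y‖ = ‖T‖ := tendsto_nhds_unique
    (tendsto_of_isCompactOperator_of_tendsto_toWeakSpace hTcpt hxφ hweak).norm hTxφ
  have hy : y ∈ normAttain T :=
    mem_normAttain_of_norm_le_one hT (norm_le_of_tendsto_toWeakSpace hweak hxφ) hTy
  have hnorm : Tendsto (fun n => ‖x (φ n)‖) atTop (𝓝 ‖y‖) :=
    hy.1 ▸ tendsto_norm_one_of_tendsto_norm_apply hT (fun n => hx (φ n)) hTxφ
  exact ⟨y, hy, φ, hφ, hKK.tendsto_of_tendsto_toWeakSpace hweak hnorm⟩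

theorem exists_norm_le_one_of_inPlus (hTA : inPlus T A) {ε δ : ℝ} (hε : 0 < ε) (hδ : 0 < δ) :
    ∃ x : X, ‖x‖ ≤ 1 ∧ ‖T‖ - ε * (δ + ‖A‖) ≤ ‖T x‖ ∧ ‖T x‖ - ε * δ ≤ ‖T x + ε • A x‖ := by
  have hlt : ‖T‖ - ε * δ < ‖T + ε • A‖ := (sub_lt_self _ (mul_pos hε hδ)).trans_le (hTA ε hε.le)
  obtain ⟨x, hx, hlt_apply⟩ := (T + ε • A).exists_lt_apply_of_lt_opNorm hlt
  have hlower : ‖T‖ - ε * δ ≤ ‖T x + ε • A x‖ := hlt_apply.le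
  have hupper : ‖T x + ε • A x‖ ≤ ‖T x‖ + ε * ‖A‖ :=
    calc ‖T x + ε • A x‖ ≤ ‖T x‖ + ε * ‖A x‖ := by
          simpa [norm_smul, abs_of_pos hε] using norm_add_le (T x) (ε • A x)
      _ ≤ ‖T x‖ + ε * ‖A‖ := by gcongr; exact A.unit_le_opNorm x hx.le
  have hTx : ‖T x‖ ≤ ‖T‖ := T.unit_le_opNorm x hx.le
  exact ⟨x, hx.le, by linarith, by linarith⟩

theorem exists_mem_normAttain_inPlus (hrefl : ReflexiveSp X) (hKK : KadetsKlee X)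
    (hTcpt : IsCompactOperator T) (hT : T ≠ 0) (hTA : inPlus T A) :
    ∃ x ∈ normAttain T, inPlus (T x) (A x) := by
  obtain ⟨ε, -, hε_pos, hε⟩ := exists_seq_strictAnti_tendsto (0 : ℝ)
  choose x hx hTx hquot using fun n =>
    exists_norm_le_one_of_inPlus hTA (hε_pos n) (hε_pos n)
  have hmax : Tendsto (fun n => ‖T (x n)‖) atTop (𝓝 ‖T‖) := by
    refine tendsto_of_tendsto_of_tendsto_of_le_of_le ?_ tendsto_const_nhds hTx
      fun n => T.unit_le_opNorm (x n) (hx n)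
    simpa using (hε.mul (hε.add_const ‖A‖)).const_sub ‖T‖
  obtain ⟨y, hy, φ, hφ, hlim⟩ := exists_subseq_tendsto_mem_normAttain hrefl hKK hTcpt hT hx hmax
  have hε' : Tendsto ε atTop (𝓝[>] 0) :=
    tendsto_nhdsWithin_iff.2 ⟨hε, Eventually.of_forall hε_pos⟩
  exact ⟨y, hy, inPlus_of_tendsto ((T.continuous.tendsto y).comp hlim)
    ((A.continuous.tendsto y).comp hlim) (hε'.comp hφ.tendsto_atTop) (hε.comp hφ.tendsto_atTop)
    (Eventually.of_forall fun n => hquot (φ n))⟩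

theorem exists_mem_inPlus_of_exists_mem_union_neg {D : Set X}
    (h : ∃ x ∈ D ∪ -D, inPlus (T x) (A x)) : ∃ x ∈ D, inPlus (T x) (A x) := by
  obtain ⟨x, hx | hx, hplus⟩ := h
  · exact ⟨x, hx, hplus⟩
  · exact ⟨-x, hx, by simpa only [map_neg, inPlus_neg_neg] using hplus⟩

end NormAttain

theorem operator_orthogonality_pointwise_of_connected_normAttain_general
    {X Y : Type*} [NormedAddCommGroup X] [NormedSpace ℝ X]
    [NormedAddCommGroup Y] [NormedSpace ℝ Y]
    (hrefl : ReflexiveSp X) (hKK : KadetsKlee X)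
    (T : X →L[ℝ] Y) (hTcpt : IsCompactOperator T) (A : X →L[ℝ] Y)
    (hTA : BJOrth T A) (D : Set X) (hDconn : IsConnected D)
    (hMT : normAttain T = D ∪ (-D)) :
    ∃ x ∈ normAttain T, BJOrth (T x) (A x) := by
  have hD : D ⊆ normAttain T := hMT ▸ subset_union_left
  rcases eq_or_ne T 0 with rfl | hT
  · obtain ⟨x, hx⟩ := hDconn.nonempty
    exact ⟨x, hD hx, fun t => by simp⟩
  have hplus_of {B : X →L[ℝ] Y} (hTB : inPlus T B) : ∃ x ∈ D, inPlus (T x) (B x) :=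
    exists_mem_inPlus_of_exists_mem_union_neg <|
      hMT ▸ exists_mem_normAttain_inPlus hrefl hKK hTcpt hT hTB
  obtain ⟨hTA_plus, hTA_minus⟩ := bjOrth_iff_inPlus_and_inMinus.1 hTA
  have hminus : ∃ x ∈ D, inMinus (T x) (A x) := by
    simpa only [neg_apply, inPlus_neg_right] using hplus_of (inPlus_neg_right.2 hTA_minus)
  obtain ⟨x, hx, hxTA⟩ := exists_bjOrth_of_isPreconnected hDconn.isPreconnected
    T.continuous.continuousOn A.continuous.continuousOn (hplus_of hTA_plus) hminus
  exact ⟨x, hD hx, hxTA⟩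

theorem operator_orthogonality_pointwise_of_connected_normAttain
    {X Y : Type*} [NormedAddCommGroup X] [NormedSpace ℝ X] [CompleteSpace X]
    [NormedAddCommGroup Y] [NormedSpace ℝ Y] [CompleteSpace Y]
    (hrefl : ReflexiveSp X) (hKK : KadetsKlee X)
    (T : X →L[ℝ] Y) (hTcpt : IsCompactOperator T) (A : X →L[ℝ] Y)
    (hTA : BJOrth T A)
    (D : Set X) (hDcpt : IsCompact D) (hDconn : IsConnected D)
    (hDsphere : D ⊆ Metric.sphere (0 : X) 1)
    (hMT : normAttain T = D ∪ (-D)) :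
    ∃ x ∈ normAttain T, BJOrth (T x) (A x) :=
  operator_orthogonality_pointwise_of_connected_normAttain_general hrefl hKK T hTcpt A hTA D
    hDconn hMT
end

section
/- Let X be a real reflexive, strictly convex Banach space with the Kadets–Klee property, let Y be a real Banach space, and let T : X → Y be a bounded linear operator that is left symmetric in the operator space and satisfies M_T ≠ ∅. Then for every x ∈ M_T and every y ∈ X with y ⊥_B x, one has Ty = 0. -/
open Filter Topology Set

/-!
Let `x ∈ M_T` and `y ⊥_B x`, and suppose `T y ≠ 0`. A functional `f` norming `u = y / ‖y‖` and
vanishing at `x` gives the rank-one operator `A = f ⊗ T u`. It vanishes at `x`, where `T` attains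
its norm, so `T ⊥_B A`, and left symmetry gives `A ⊥_B T`. Reflexivity, strict convexity and the
Kadets–Klee property force norming sequences of `A` to converge, up to signs, to `u`. Orthogonality
of `A` and `T` can therefore be tested at `u`, where it says `T u ⊥_B T u`: a contradiction.
-/

/-- `A` absolutely strongly exposes `u`: it attains its norm at `u`, and every sequence in the
closed unit ball along which `‖A z‖` tends to `‖A‖` converges to `u` up to the sign of its terms.
The distance to `{u, -u}` is written as `min ‖z - u‖ ‖z + u‖`. -/
def AbsolutelyStronglyExposes {X Y : Type*} [NormedAddCommGroup X] [NormedSpace ℝ X]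
    [NormedAddCommGroup Y] [NormedSpace ℝ Y] (A : X →L[ℝ] Y) (u : X) : Prop :=
  u ∈ normAttain A ∧ ∀ z : ℕ → X, (∀ n, ‖z n‖ ≤ 1) →
    Tendsto (fun n => ‖A (z n)‖) atTop (𝓝 ‖A‖) →
    Tendsto (fun n => min ‖z n - u‖ ‖z n + u‖) atTop (𝓝 0)

section Functional

variable {E : Type*} [NormedAddCommGroup E] [NormedSpace ℝ E]

theorem BJOrth.eq_zero_of_self {x : E} (h : BJOrth x x) : x = 0 := by
  simpa using h (-1)

theorem BJOrth.norm_quotient_mk {x y : E} (h : BJOrth y x) :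
    ‖(Submodule.Quotient.mk y : E ⧸ Submodule.span ℝ {x})‖ = ‖y‖ := by
  refine le_antisymm (Submodule.Quotient.norm_mk_le _ y) ?_
  refine QuotientAddGroup.le_norm_iff.2 fun m hm => ?_
  obtain ⟨t, ht⟩ := Submodule.mem_span_singleton.1 ((Submodule.Quotient.eq _).1 hm)
  simpa only [ht, add_sub_cancel] using h t

theorem BJOrth.exists_norming_functional {x y : E} (h : BJOrth y x) (hy : y ≠ 0) :
    ∃ f : StrongDual ℝ E, ‖f‖ = 1 ∧ f y = ‖y‖ ∧ f x = 0 := by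
  let S := Submodule.span ℝ {x}
  have : IsClosed (S : Set E) := S.closed_of_finiteDimensional
  obtain ⟨g, hg, hgy⟩ := exists_dual_vector'' ℝ (Submodule.Quotient.mk y : E ⧸ S)
  let f : StrongDual ℝ E := g ∘L S.mkQL
  have hfy : f y = ‖y‖ := hgy.trans h.norm_quotient_mk
  have hf_le : ‖f‖ ≤ 1 := f.opNorm_le_bound zero_le_one fun z =>
    (g.le_of_opNorm_le hg _).trans (by gcongr; exact Submodule.Quotient.norm_mk_le S z)
  have hf_ge : 1 ≤ ‖f‖ := by
    have := f.le_opNorm y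
    rw [hfy, norm_norm] at this
    exact one_le_of_le_mul_right₀ (norm_pos_iff.2 hy) this
  refine ⟨f, hf_le.antisymm hf_ge, hfy, ?_⟩
  have hx : S.mkQL x = 0 :=
    (Submodule.Quotient.mk_eq_zero S).2 (Submodule.mem_span_singleton_self x)
  rw [ContinuousLinearMap.comp_apply, hx, map_zero]

theorem ReflexiveSp.isCompact_toWeakSpace_closedBall (hE : ReflexiveSp E) (r : ℝ) :
    IsCompact (toWeakSpace ℝ E '' Metric.closedBall 0 r) := by
  let J := NormedSpace.inclusionInDoubleDualWeak ℝ E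
  have hJ : toWeakSpace ℝ E '' Metric.closedBall 0 r =
      J ⁻¹' (WeakDual.toStrongDual ⁻¹' Metric.closedBall 0 r) := by
    rw [LinearEquiv.image_eq_preimage_symm]
    ext x
    have hx : ‖(J x).toStrongDual‖ = ‖(toWeakSpace ℝ E).symm x‖ :=
      (NormedSpace.inclusionInDoubleDualLi ℝ).norm_map _
    simp only [mem_preimage, mem_closedBall_zero_iff, ← hx]
    exact (mem_closedBall_zero_iff (E := StrongDual ℝ (StrongDual ℝ E))).symm
  have hrange : WeakDual.toStrongDual ⁻¹' Metric.closedBall 0 r ⊆ range J := fun φ _ =>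
    (hE φ.toStrongDual).imp fun _ hx => congrArg StrongDual.toWeakDual hx
  rw [hJ]
  exact (NormedSpace.isEmbedding_inclusionInDoubleDualWeak ℝ E).isCompact_preimage'
    (WeakDual.isCompact_closedBall 0 r) hrange

variable {f : StrongDual ℝ E} {u : E}

theorem apply_le_norm_of_opNorm_le_one (hf : ‖f‖ ≤ 1) (z : E) : f z ≤ ‖z‖ :=
  (Real.le_norm_self _).trans ((f.le_of_opNorm_le hf z).trans_eq (one_mul _))

variable [StrictConvexSpace ℝ E]

theorem eq_of_apply_eq_norm (hf : ‖f‖ ≤ 1) {v : E} (hu : f u = ‖u‖) (hv : f v = ‖v‖)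
    (huv : ‖u‖ = ‖v‖) : u = v := by
  refine eq_of_norm_eq_of_norm_add_eq huv ((norm_add_le u v).antisymm ?_)
  calc ‖u‖ + ‖v‖ = f (u + v) := by rw [map_add, hu, hv]
    _ ≤ ‖u + v‖ := apply_le_norm_of_opNorm_le_one hf _

theorem ReflexiveSp.tendsto_apply_of_tendsto_norming (hE : ReflexiveSp E) (hf : ‖f‖ ≤ 1)
    (hfu : f u = ‖u‖) {ι : Type*} {l : Filter ι} {z : ι → E} (hz : ∀ i, ‖z i‖ ≤ ‖u‖)
    (hfz : Tendsto (fun i => f (z i)) l (𝓝 ‖u‖)) (g : StrongDual ℝ E) :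
    Tendsto (fun i => g (z i)) l (𝓝 (g u)) := by
  have heval (φ : StrongDual ℝ E) : Continuous fun x => φ ((toWeakSpace ℝ E).symm x) :=
    WeakBilin.eval_continuous _ φ
  suffices Tendsto (fun i => toWeakSpace ℝ E (z i)) l (𝓝 (toWeakSpace ℝ E u)) from
    ((heval g).tendsto _).comp this
  refine (hE.isCompact_toWeakSpace_closedBall ‖u‖).tendsto_nhds_of_unique_mapClusterPt
    (Eventually.of_forall fun i => mem_image_of_mem _ (mem_closedBall_zero_iff.2 (hz i))) ?_
  rintro _ ⟨w, hw, rfl⟩ hcluster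
  have hfw : f w = ‖u‖ := by
    have hcluster_f := hcluster.continuousAt_comp (heval f).continuousAt
    exact eq_of_nhds_neBot (hcluster_f.clusterPt.neBot.mono (inf_le_inf_left _ hfz))
  have hwu : ‖w‖ = ‖u‖ := (mem_closedBall_zero_iff.1 hw).antisymm
    (hfw.symm.trans_le (apply_le_norm_of_opNorm_le_one hf w))
  rw [eq_of_apply_eq_norm hf (hfw.trans hwu.symm) hfu hwu]

theorem ReflexiveSp.tendsto_of_tendsto_norming (hE : ReflexiveSp E) (hKK : KadetsKlee E)
    (hf : ‖f‖ ≤ 1) (hfu : f u = ‖u‖) {z : ℕ → E} (hz : ∀ n, ‖z n‖ ≤ ‖u‖)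
    (hfz : Tendsto (fun n => f (z n)) atTop (𝓝 ‖u‖)) : Tendsto z atTop (𝓝 u) := by
  have hnorm : Tendsto (fun n => ‖z n‖) atTop (𝓝 ‖u‖) :=
    tendsto_of_tendsto_of_tendsto_of_le_of_le hfz tendsto_const_nhds
      (fun n => apply_le_norm_of_opNorm_le_one hf (z n)) hz
  exact tendsto_iff_norm_sub_tendsto_zero.2
    (hKK z u (hE.tendsto_apply_of_tendsto_norming hf hfu hz hfz) hnorm)

theorem ReflexiveSp.absolutelyStronglyExposes (hE : ReflexiveSp E) (hKK : KadetsKlee E)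
    (hf : ‖f‖ = 1) (hu : ‖u‖ = 1) (hfu : f u = 1) : AbsolutelyStronglyExposes f u := by
  refine ⟨⟨hu, by rw [hfu, hf, norm_one]⟩, fun z hz hfz => ?_⟩
  let z' : ℕ → E := fun n => if 0 ≤ f (z n) then z n else -z n
  have hz' (n : ℕ) : (z' n = z n ∨ z' n = -z n) ∧ f (z' n) = ‖f (z n)‖ := by
    by_cases h : 0 ≤ f (z n)
    · simp [z', h, abs_of_nonneg]
    · simp [z', h, abs_of_neg (not_le.1 h)]
  have hlim : Tendsto z' atTop (𝓝 u) := by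
    refine hE.tendsto_of_tendsto_norming hKK hf.le (hfu.trans hu.symm) (fun n => ?_) ?_
    · rcases (hz' n).1 with h | h <;> simp only [h, norm_neg, hu, hz n]
    · simpa only [(hz' _).2, hu, hf] using hfz
  refine squeeze_zero (fun n => by positivity) (fun n => ?_)
    (tendsto_iff_norm_sub_tendsto_zero.1 hlim)
  rcases (hz' n).1 with h | h
  · rw [h]
    exact min_le_left _ _
  · rw [h, ← norm_neg (-z n - u), neg_sub', neg_neg, sub_neg_eq_add]
    exact min_le_right _ _

end Functional

section Operator

variable {X Y : Type*} [NormedAddCommGroup X] [NormedSpace ℝ X]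
  [NormedAddCommGroup Y] [NormedSpace ℝ Y] {A B : X →L[ℝ] Y} {u : X}

theorem AbsolutelyStronglyExposes.smulRight {f : StrongDual ℝ X}
    (hf : AbsolutelyStronglyExposes f u) {w : Y} (hw : w ≠ 0) :
    AbsolutelyStronglyExposes (f.smulRight w) u := by
  have hnorm (z : X) : ‖f.smulRight w z‖ = ‖f z‖ * ‖w‖ := norm_smul _ _
  refine ⟨⟨hf.1.1, by rw [hnorm, hf.1.2, ContinuousLinearMap.norm_smulRight_apply]⟩,
    fun z hz hlim => hf.2 z hz ?_⟩
  have hw' : ‖w‖ ≠ 0 := norm_ne_zero_iff.2 hw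
  simpa only [hnorm, ContinuousLinearMap.norm_smulRight_apply, mul_div_cancel_right₀ _ hw']
    using hlim.div_const ‖w‖

theorem norm_convexCombination_apply_le (A C : X →L[ℝ] Y) {s : ℝ} (hs : s ∈ Icc 0 1) (z : X) :
    ‖((1 - s) • A + s • C) z‖ ≤ (1 - s) * ‖A z‖ + s * ‖C z‖ := by
  refine norm_add_le_of_le (norm_smul_of_nonneg ?_ _).le (norm_smul_of_nonneg hs.1 _).le
  exact sub_nonneg.2 hs.2

theorem norm_apply_le_add_opNorm_mul_min (C : X →L[ℝ] Y) (u z : X) :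
    ‖C z‖ ≤ ‖C u‖ + ‖C‖ * min ‖z - u‖ ‖z + u‖ := by
  rcases min_choice ‖z - u‖ ‖z + u‖ with h | h <;> rw [h]
  · calc ‖C z‖ = ‖C u + C (z - u)‖ := by rw [map_sub, add_sub_cancel]
      _ ≤ ‖C u‖ + ‖C‖ * ‖z - u‖ := norm_add_le_of_le le_rfl (C.le_opNorm _)
  · calc ‖C z‖ = ‖C (z + u) - C u‖ := by rw [map_add, add_sub_cancel_right]
      _ ≤ ‖C‖ * ‖z + u‖ + ‖C u‖ := norm_sub_le_of_le (C.le_opNorm _) le_rfl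
      _ = ‖C u‖ + ‖C‖ * ‖z + u‖ := add_comm _ _

theorem AbsolutelyStronglyExposes.norm_le_norm_apply {C : X →L[ℝ] Y}
    (hA : AbsolutelyStronglyExposes A u)
    (hC : ∀ s ∈ Icc (0 : ℝ) 1, ‖A‖ ≤ ‖(1 - s) • A + s • C‖) : ‖A‖ ≤ ‖C u‖ := by
  let s : ℕ → ℝ := fun n => 1 / ((n : ℝ) + 1)
  have hs_pos (n : ℕ) : 0 < s n := Nat.one_div_pos_of_nat
  have hs_mem (n : ℕ) : s n ∈ Icc (0 : ℝ) 1 :=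
    ⟨(hs_pos n).le, by simpa [s] using Nat.one_div_le_one_div (α := ℝ) n.zero_le⟩
  have hs_lim : Tendsto s atTop (𝓝 0) := tendsto_one_div_add_atTop_nhds_zero_nat
  -- The error `s ^ 2` is `o(s)`, so it disappears after division by `s`.
  have happrox (n : ℕ) :
      ∃ z, ‖z‖ < 1 ∧ ‖A‖ - s n ^ 2 < ‖((1 - s n) • A + s n • C) z‖ :=
    ContinuousLinearMap.exists_lt_apply_of_lt_opNorm _
      ((sub_lt_self _ (pow_pos (hs_pos n) 2)).trans_le (hC _ (hs_mem n)))
  choose z hz hz_lt using happrox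
  have hA_le (n : ℕ) : ‖A (z n)‖ ≤ ‖A‖ := A.unit_le_opNorm _ (hz n).le
  have hC_le (n : ℕ) : ‖C (z n)‖ ≤ ‖C‖ := C.unit_le_opNorm _ (hz n).le
  have hcomb (n : ℕ) : ‖A‖ - s n ^ 2 < (1 - s n) * ‖A (z n)‖ + s n * ‖C (z n)‖ :=
    (hz_lt n).trans_le (norm_convexCombination_apply_le A C (hs_mem n) (z n))
  have hnorming : Tendsto (fun n => ‖A (z n)‖) atTop (𝓝 ‖A‖) := by
    have hlow : Tendsto (fun n => ‖A‖ - s n ^ 2 - s n * ‖C‖) atTop (𝓝 ‖A‖) := by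
      simpa using (hs_lim.pow 2).const_sub ‖A‖ |>.sub (hs_lim.mul_const ‖C‖)
    refine tendsto_of_tendsto_of_tendsto_of_le_of_le hlow tendsto_const_nhds (fun n => ?_) hA_le
    linarith [hcomb n, mul_le_mul_of_nonneg_left (hC_le n) (hs_pos n).le,
      mul_nonneg (hs_pos n).le (norm_nonneg (A (z n)))]
  have hbound (n : ℕ) : ‖A‖ - s n ≤ ‖C u‖ + ‖C‖ * min ‖z n - u‖ ‖z n + u‖ := by
    refine le_trans (le_of_mul_le_mul_left ?_ (hs_pos n))
      (norm_apply_le_add_opNorm_mul_min C u (z n))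
    linarith [hcomb n, mul_le_mul_of_nonneg_left (hA_le n) (sub_nonneg.2 (hs_mem n).2)]
  have hdist := hA.2 z (fun n => (hz n).le) hnorming
  simpa using le_of_tendsto_of_tendsto' (hs_lim.const_sub ‖A‖)
    ((hdist.const_mul ‖C‖).const_add ‖C u‖) hbound

theorem BJOrth.apply_of_absolutelyStronglyExposes (h : BJOrth A B)
    (hA : AbsolutelyStronglyExposes A u) : BJOrth (A u) (B u) := fun t => by
  rw [hA.1.2]
  refine hA.norm_le_norm_apply (C := A + t • B) fun s _ => ?_
  have hsplit : (1 - s) • A + s • (A + t • B) = A + (s * t) • B := by module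
  exact hsplit ▸ h (s * t)

theorem bjOrth_of_apply_eq_zero {x : X} (hx : x ∈ normAttain A) (hBx : B x = 0) :
    BJOrth A B := fun t => by
  simpa [hBx, hx.2] using (A + t • B).unit_le_opNorm x hx.1.le

end Operator

-- Locally uniformly convex spaces also satisfy `hexp`.
theorem left_symmetric_bounded_operator_vanishes_on_orthogonal_general
    {X Y : Type*} [NormedAddCommGroup X] [NormedSpace ℝ X]
    [NormedAddCommGroup Y] [NormedSpace ℝ Y]
    (hexp : ∀ (f : StrongDual ℝ X) (u : X), ‖f‖ = 1 → ‖u‖ = 1 → f u = 1 →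
      AbsolutelyStronglyExposes f u)
    (T : X →L[ℝ] Y) (hTsym : LeftSymPt T) :
    ∀ x ∈ normAttain T, ∀ y : X, BJOrth y x → T y = 0 := by
  intro x hx y hyx
  by_contra hTy
  have hy : y ≠ 0 := ne_of_apply_ne T (by rwa [map_zero])
  obtain ⟨f, hf, hfy, hfx⟩ := hyx.exists_norming_functional hy
  let u := ‖y‖⁻¹ • y
  have hfu : f u = 1 := by simp [u, hfy, hy]
  have hTu : T u ≠ 0 := by simp [u, hy, hTy]
  let A := f.smulRight (T u)
  have hTA : BJOrth T A := bjOrth_of_apply_eq_zero hx (by simp [A, hfx])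
  have hA : AbsolutelyStronglyExposes A u :=
    (hexp f u hf (norm_smul_inv_norm hy) hfu).smulRight hTu
  have hself : BJOrth (A u) (T u) := (hTsym A hTA).apply_of_absolutelyStronglyExposes hA
  exact hTu (BJOrth.eq_zero_of_self (by simpa [A, hfu] using hself))

theorem left_symmetric_bounded_operator_vanishes_on_orthogonal
    {X Y : Type*} [NormedAddCommGroup X] [NormedSpace ℝ X]
    [StrictConvexSpace ℝ X] [CompleteSpace X]
    [NormedAddCommGroup Y] [NormedSpace ℝ Y] [CompleteSpace Y]
    (hrefl : ReflexiveSp X) (hKK : KadetsKlee X)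
    (T : X →L[ℝ] Y) (hTsym : LeftSymPt T)
    (hMT : (normAttain T).Nonempty) :
    ∀ x ∈ normAttain T, ∀ y : X, BJOrth y x → T y = 0 :=
  left_symmetric_bounded_operator_vanishes_on_orthogonal_general
    (fun _ _ hf hu hfu => hrefl.absolutelyStronglyExposes hKK hf hu hfu) T hTsym
end

section
/- Let X and Y be real normed linear spaces with X strictly convex, reflexive and complete. Let T : X → Y be a compact bounded linear operator that is left symmetric in the operator space with ‖T‖ = 1, suppose Tx = f(x)·w for all x, where w ∈ Y is a unit vector and f is a norm-one continuous linear functional on X, and suppose x₁ ∈ M_T. Then x₁ is a left symmetric point of X if and only if x₁ is a smooth point of X. -/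
open Filter Topology Set

/-!
By James' theorem `x ⊥_B y` holds exactly when some norming functional of `x` vanishes at `y`.

In a strictly convex space a line parallel to `x` has at most one point orthogonal to `x`. If `x` is
left symmetric and `g` norms `x`, then `z - g z • x` is orthogonal to `x`, so `g z` is determined by
`z`: every left symmetric point of such a space is smooth.

Conversely, left symmetry of `z ↦ f z • w`, with `w ≠ 0`, gives left symmetry of `f` in the dual
space. If `f` attains its norm at `x`, it is orthogonal to every functional annihilating `x`, so all
of these are orthogonal to `f`. Subtracting from a norming functional `k` of `y ∈ ker f` the
multiple of `f` that makes it annihilate `x` therefore does not increase its norm, and it still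
norms `y`; thus `ker f ⊥_B x`. When `x` is smooth, `f` is up to scaling its only norming functional,
so `x ⊥_B y` forces `y ∈ ker f`.
-/

section Orthogonality

variable {E : Type*} [NormedAddCommGroup E] [NormedSpace ℝ E] {x y z : E}

theorem BJOrth.of_dual_vector {g : StrongDual ℝ E} (hg : ‖g‖ ≤ 1) (hgx : g x = ‖x‖)
    (hgy : g y = 0) : BJOrth x y := fun t =>
  calc
    ‖x‖ = g (x + t • y) := by simp [hgx, hgy]
    _ ≤ ‖g (x + t • y)‖ := le_abs_self _
    _ ≤ ‖x + t • y‖ := by simpa using g.le_of_opNorm_le hg (x + t • y)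

theorem BJOrth.norm_le_norm_mkQL (h : BJOrth x y) : ‖x‖ ≤ ‖(ℝ ∙ y).mkQL x‖ := by
  refine QuotientAddGroup.le_norm_iff.2 fun m hm => ?_
  obtain ⟨t, ht⟩ := Submodule.mem_span_singleton.1 ((Submodule.Quotient.eq (ℝ ∙ y)).1 hm)
  simpa [ht] using h t

theorem bjOrth_iff_exists_dual_vector :
    BJOrth x y ↔ ∃ g : StrongDual ℝ E, ‖g‖ ≤ 1 ∧ g x = ‖x‖ ∧ g y = 0 := by
  refine ⟨fun h => ?_, fun ⟨_, hg, hgx, hgy⟩ => .of_dual_vector hg hgx hgy⟩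
  let π := (ℝ ∙ y).mkQL
  have hπ (z : E) : ‖π z‖ ≤ ‖z‖ := Submodule.Quotient.norm_mk_le _ z
  obtain ⟨φ, hφ, hφx⟩ := exists_dual_vector'' ℝ (π x)
  refine ⟨φ ∘L π, ?_, hφx.trans ((hπ x).antisymm h.norm_le_norm_mkQL), ?_⟩
  · refine ContinuousLinearMap.opNorm_le_bound _ zero_le_one fun z => ?_
    exact φ.le_of_opNorm_le_of_le hφ (hπ z)
  · have hy : π y = 0 :=
      (Submodule.Quotient.mk_eq_zero _).2 (Submodule.mem_span_singleton_self y)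
    rw [ContinuousLinearMap.comp_apply, hy, map_zero]

theorem BJOrth.norm_sub_smul_le {a : ℝ} (h : BJOrth (z - a • x) x) (b : ℝ) :
    ‖z - a • x‖ ≤ ‖z - b • x‖ := by
  convert h (a - b) using 2
  module

theorem BJOrth.sub_smul_unique [StrictConvexSpace ℝ E] {a b : ℝ} (hx : x ≠ 0)
    (ha : BJOrth (z - a • x) x) (hb : BJOrth (z - b • x) x) : a = b := by
  have hnorm : ‖z - a • x‖ = ‖z - b • x‖ := (ha.norm_sub_smul_le b).antisymm (hb.norm_sub_smul_le a)
  have hmid : (1 / 2 : ℝ) • ((z - a • x) + (z - b • x)) = z - ((a + b) / 2) • x := by module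
  have heq : z - a • x = z - b • x := by
    by_contra hne
    have hlt := (norm_midpoint_lt_iff hnorm).2 hne
    rw [hmid] at hlt
    exact hlt.not_ge (ha.norm_sub_smul_le _)
  exact smul_left_injective ℝ hx (sub_right_injective heq)

theorem LeftSymPt.smoothPt [StrictConvexSpace ℝ E] (hx : ‖x‖ = 1) (h : LeftSymPt x) :
    SmoothPt x := by
  have hx₀ : x ≠ 0 := norm_ne_zero_iff.1 (hx ▸ one_ne_zero)
  have sub_smul_orth {g : StrongDual ℝ E} (hg : ‖g‖ = 1 ∧ g x = 1) (z : E) :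
      BJOrth (z - g z • x) x :=
    h _ (.of_dual_vector hg.1.le (hg.2.trans hx.symm) (by simp [hg.2]))
  obtain ⟨g, hg, hgx⟩ := exists_dual_vector ℝ x (norm_ne_zero_iff.2 hx₀)
  have hg_norming : ‖g‖ = 1 ∧ g x = 1 := ⟨hg, by simpa [hx] using hgx⟩
  refine ⟨g, hg_norming, fun g' hg' => ContinuousLinearMap.ext fun z => ?_⟩
  exact (sub_smul_orth hg' z).sub_smul_unique hx₀ (sub_smul_orth hg_norming z)

end Orthogonality

section Operators

variable {X Y : Type*} [NormedAddCommGroup X] [NormedSpace ℝ X]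
  [NormedAddCommGroup Y] [NormedSpace ℝ Y] {x : X}

theorem apply_ne_zero_of_mem_normAttain {T : X →L[ℝ] Y} (hT : T ≠ 0) (hx : x ∈ normAttain T) :
    T x ≠ 0 := by
  rwa [← norm_ne_zero_iff, hx.2, norm_ne_zero_iff]

theorem BJOrth.of_apply_of_mem_normAttain {T A : X →L[ℝ] Y} (hx : x ∈ normAttain T)
    (h : BJOrth (T x) (A x)) : BJOrth T A := fun t =>
  calc
    ‖T‖ = ‖T x‖ := hx.2.symm
    _ ≤ ‖(T + t • A) x‖ := h t
    _ ≤ ‖T + t • A‖ := (T + t • A).unit_le_opNorm x hx.1.le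

theorem bjOrth_smulRight_iff {f g : StrongDual ℝ X} {w : Y} (hw : w ≠ 0) :
    BJOrth (f.smulRight w) (g.smulRight w) ↔ BJOrth f g := by
  have hsum (t : ℝ) : f.smulRight w + t • g.smulRight w = (f + t • g).smulRight w := by
    ext z
    simp [add_smul, mul_smul]
  simp only [BJOrth, hsum, ContinuousLinearMap.norm_smulRight_apply,
    mul_le_mul_iff_left₀ (norm_pos_iff.2 hw)]

theorem LeftSymPt.of_smulRight {f : StrongDual ℝ X} {w : Y} (hw : w ≠ 0)
    (h : LeftSymPt (f.smulRight w)) : LeftSymPt f := fun _ hfg =>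
  (bjOrth_smulRight_iff hw).1 (h _ ((bjOrth_smulRight_iff hw).2 hfg))

theorem normAttain_smulRight (f : StrongDual ℝ X) {w : Y} (hw : w ≠ 0) :
    normAttain (f.smulRight w) = normAttain f := by
  ext x
  simp [normAttain, norm_smul, hw]

end Operators

section Functionals

variable {X : Type*} [NormedAddCommGroup X] [NormedSpace ℝ X] {f : StrongDual ℝ X} {x y : X}

theorem LeftSymPt.norm_sub_smul_le_of_dual (h : LeftSymPt f) (hx : x ∈ normAttain f)
    (hfx : f x ≠ 0) (k : StrongDual ℝ X) : ‖k - (k x / f x) • f‖ ≤ ‖k‖ := by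
  have horth : BJOrth f (k - (k x / f x) • f) :=
    .of_apply_of_mem_normAttain hx fun t => by simp [hfx]
  simpa using (h _ horth).norm_sub_smul_le 0

theorem LeftSymPt.bjOrth_of_apply_eq_zero (h : LeftSymPt f) (hx : x ∈ normAttain f)
    (hf : f ≠ 0) (hfy : f y = 0) : BJOrth y x := by
  have hfx : f x ≠ 0 := apply_ne_zero_of_mem_normAttain hf hx
  obtain ⟨k, hk, hky⟩ := exists_dual_vector'' ℝ y
  exact .of_dual_vector ((h.norm_sub_smul_le_of_dual hx hfx k).trans hk)
    (by simpa [hfy] using hky) (by simp [hfx])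

theorem SmoothPt.apply_eq_zero_of_bjOrth (h : SmoothPt x) (hx : x ∈ normAttain f)
    (hf : f ≠ 0) (hxy : BJOrth x y) : f y = 0 := by
  have hfx : f x ≠ 0 := apply_ne_zero_of_mem_normAttain hf hx
  have hf_norming : ‖(f x)⁻¹ • f‖ = 1 ∧ ((f x)⁻¹ • f) x = 1 :=
    ⟨by simp [norm_smul, ← hx.2, hfx], by simp [hfx]⟩
  obtain ⟨g, hg, hgx, hgy⟩ := bjOrth_iff_exists_dual_vector.1 hxy
  rw [hx.1] at hgx
  have hg_norm : ‖g‖ = 1 :=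
    hg.antisymm (by simpa [hgx] using g.unit_le_opNorm x hx.1.le)
  have hgf : g = (f x)⁻¹ • f := h.unique ⟨hg_norm, hgx⟩ hf_norming
  simpa [hgf, hfx] using hgy

theorem SmoothPt.leftSymPt_of_dual (h : SmoothPt x) (hx : x ∈ normAttain f)
    (hf : f ≠ 0) (hsym : LeftSymPt f) : LeftSymPt x := fun _ hxy =>
  hsym.bjOrth_of_apply_eq_zero hx hf (h.apply_eq_zero_of_bjOrth hx hf hxy)

end Functionals

theorem rank_one_left_symmetric_operator_left_symmetric_iff_smooth_general
    {X Y : Type*} [NormedAddCommGroup X] [NormedSpace ℝ X] [StrictConvexSpace ℝ X]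
    [NormedAddCommGroup Y] [NormedSpace ℝ Y]
    {T : X →L[ℝ] Y} (hT : T ≠ 0) (hTsym : LeftSymPt T)
    {w : Y} {f : X →L[ℝ] ℝ} (hTrank : ∀ x : X, T x = f x • w)
    {x₁ : X} (hx₁ : x₁ ∈ normAttain T) :
    LeftSymPt x₁ ↔ SmoothPt x₁ := by
  obtain rfl : T = f.smulRight w := ContinuousLinearMap.ext hTrank
  have hf : f ≠ 0 := by rintro rfl; simp at hT
  have hw : w ≠ 0 := by rintro rfl; simp at hT
  have hf_attain : x₁ ∈ normAttain f := normAttain_smulRight f hw ▸ hx₁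
  exact ⟨fun h => h.smoothPt hx₁.1,
    fun h => h.leftSymPt_of_dual hf_attain hf (hTsym.of_smulRight hw)⟩

theorem rank_one_left_symmetric_operator_left_symmetric_iff_smooth
    {X Y : Type*} [NormedAddCommGroup X] [NormedSpace ℝ X]
    [StrictConvexSpace ℝ X] [CompleteSpace X]
    [NormedAddCommGroup Y] [NormedSpace ℝ Y]
    (hrefl : ReflexiveSp X)
    (T : X →L[ℝ] Y) (hTcpt : IsCompactOperator T)
    (hTsym : LeftSymPt T) (hTnorm : ‖T‖ = 1)
    (w : Y) (hw : ‖w‖ = 1) (f : X →L[ℝ] ℝ) (hf : ‖f‖ = 1)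
    (hTrank : ∀ x : X, T x = f x • w)
    (x₁ : X) (hx₁ : x₁ ∈ normAttain T) :
    LeftSymPt x₁ ↔ SmoothPt x₁ := by
  have hT : T ≠ 0 := by rintro rfl; simp at hTnorm
  exact rank_one_left_symmetric_operator_left_symmetric_iff_smooth_general hT hTsym hTrank hx₁
end
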